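/- Let K be a field of characteristic 0, let L be a finite Galois extension of K, and let α ∈ L. For each integer n ≥ 0, let P_n(T) ∈ K[T] be the minimal polynomial of α^n over K. Then the sequence (P_n(T))_{n≥0} is a rational sequence: there exist F ∈ (L[T])[x] and G ∈ L[x] with G ≠ 0 such that G(x)·∑_{n≥0} P_n(T) x^n = F(x) as formal power series in x with coefficients in L[T]. -/

import Mathlib

/-!
The conjugates of `αⁿ` are the `σ(α)ⁿ` for `σ` in the Galois group, so `Pₙ` is the product of
`T - σ(α)ⁿ` over representatives `σ` of the fibres of `σ ↦ σ(α)ⁿ`. For `n ≥ 1` these fibres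
depend only on `n` modulo some `N > 0` (`exists_common_period`): `σ(α)ⁿ = τ(α)ⁿ` says that the
order of `σ(α) / τ(α)` divides `n`, and `N` can be taken to be a common multiple of the finite
orders that occur. Hence on each residue class mod `N` one fixed set of representatives works
(`minpoly_pow_eq_prod`). Expanding the product writes `Pₙ`, up to a correction at `n = 0`, as a
finite sum of terms `Q(T) cⁿ` supported on a single class `r`, each with the rational generating
function `Q cʳ xʳ / (1 - cᴺ xᴺ)`.
-/

open Polynomial in
/-- Rationality of a sequence of polynomials: some nonzero `G ∈ L[x]` times the generating
function is a polynomial in `x`. -/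
def IsRationalSeq {L : Type*} [Field L] (f : ℕ → L[X]) : Prop :=
  ∃ F : Polynomial (Polynomial L), ∃ G : Polynomial L, G ≠ 0 ∧
    ((G.map (Polynomial.C : L →+* Polynomial L) : Polynomial (Polynomial L)) :
        PowerSeries (Polynomial L)) * PowerSeries.mk f = (F : PowerSeries (Polynomial L))

namespace IsRationalSeq

open Polynomial

variable {L : Type*} [Field L]

theorem add {f g : ℕ → L[X]} (hf : IsRationalSeq f) (hg : IsRationalSeq g) :
    IsRationalSeq (fun n => f n + g n) := by
  obtain ⟨F, G, hG, h⟩ := hf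
  obtain ⟨F', G', hG', h'⟩ := hg
  refine ⟨G'.map C * F + G.map C * F', G * G', mul_ne_zero hG hG', ?_⟩
  have : PowerSeries.mk (fun n => f n + g n) = PowerSeries.mk f + PowerSeries.mk g := by
    ext1 n
    simp
  rw [this, Polynomial.map_mul, Polynomial.coe_add, Polynomial.coe_mul, Polynomial.coe_mul,
    Polynomial.coe_mul, ← h, ← h']
  ring

theorem zero : IsRationalSeq (fun _ => (0 : L[X])) :=
  ⟨0, 1, one_ne_zero, by ext1 n; simp⟩

theorem sum {ι : Type*} (s : Finset ι) {f : ι → ℕ → L[X]}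
    (h : ∀ i ∈ s, IsRationalSeq (f i)) : IsRationalSeq (fun n => ∑ i ∈ s, f i n) := by
  classical
  induction s using Finset.induction_on with
  | empty => simpa using zero
  | insert a s ha ih =>
    simp only [Finset.sum_insert ha]
    exact (h a (by simp)).add (ih fun i hi => h i (by simp [hi]))

theorem single_zero (Q : L[X]) : IsRationalSeq (fun n => if n = 0 then Q else 0) := by
  refine ⟨C Q, 1, one_ne_zero, ?_⟩
  ext1 n
  simp [PowerSeries.coeff_C]

/-- The generating function is `Q cʳ xʳ / (1 - cᴺ xᴺ)`. -/
theorem geometric {N r : ℕ} (hr : r < N) (Q : L[X]) (c : L) :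
    IsRationalSeq (fun n => if n % N = r then Q * C c ^ n else 0) := by
  refine ⟨monomial r (Q * C c ^ r), 1 - C (c ^ N) * X ^ N, ?_, ?_⟩
  · intro h
    have := congrArg (fun p => coeff p 0) h
    have hN : 0 ≠ N := by omega
    simp [coeff_X_pow, hN] at this
  · ext1 n
    simp only [Polynomial.map_sub, Polynomial.map_one, Polynomial.map_mul, Polynomial.map_C,
      Polynomial.map_pow, Polynomial.map_X, Polynomial.coe_sub, Polynomial.coe_one,
      Polynomial.coe_mul, Polynomial.coe_C, Polynomial.coe_pow, Polynomial.coe_X, sub_mul,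
      one_mul, map_sub, mul_assoc, PowerSeries.coeff_C_mul, PowerSeries.coeff_X_pow_mul',
      PowerSeries.coeff_mk, Polynomial.coeff_coe, coeff_monomial]
    by_cases hn : N ≤ n
    · obtain ⟨m, rfl⟩ := Nat.exists_eq_add_of_le hn
      have h1 : r ≠ N + m := by omega
      simp only [hn, if_true, Nat.add_mod_left, Nat.add_sub_cancel_left, h1, if_false]
      split_ifs
      · rw [pow_add, C_pow]; ring
      · simp
    · rw [Nat.mod_eq_of_lt (by omega)]
      by_cases h : n = r
      · subst h; simp [hn]
      · simp [hn, h, Ne.symm h]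

/-- Expanding the product turns the sequence into a sum of geometric ones supported on a single
residue class; the extra factor `Q cⁿ` makes the induction on `s` go through. -/
theorem prod_class {ι : Type*} {N r : ℕ} (hr : r < N) (a : ι → L) (s : Finset ι) :
    ∀ (Q : L[X]) (c : L), IsRationalSeq
      (fun n => if n % N = r then Q * C c ^ n * ∏ i ∈ s, (X - C (a i ^ n)) else 0) := by
  classical
  induction s using Finset.induction_on with
  | empty => intro Q c; simpa using geometric hr Q c
  | insert i s hi ih =>
    intro Q c
    convert (ih (Q * X) c).add (ih (-Q) (c * a i)) using 2 with n
    split_ifs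
    · rw [Finset.prod_insert hi, C_mul, C_pow]; ring
    · simp

end IsRationalSeq

/-- Among positive exponents, whether `aⁿ = bⁿ` holds depends only on a residue class of `n`.
Positivity is needed: if `a / b` is not a root of unity, the exponent `0` is exceptional. -/
theorem exists_period {L : Type*} [Field L] (a b : L) : ∃ N : ℕ, 0 < N ∧
    ∀ n m : ℕ, 0 < n → 0 < m → n ≡ m [MOD N] → a ^ n = b ^ n → a ^ m = b ^ m := by
  by_cases hb : b = 0
  · refine ⟨1, one_pos, fun n m hn hm _ h => ?_⟩
    subst hb
    rw [zero_pow hn.ne'] at h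
    rw [eq_zero_of_pow_eq_zero h]
  have key : ∀ n : ℕ, a ^ n = b ^ n ↔ orderOf (a / b) ∣ n := fun n => by
    rw [orderOf_dvd_iff_pow_eq_one, div_pow, div_eq_one_iff_eq (pow_ne_zero _ hb)]
  by_cases ho : orderOf (a / b) = 0
  · refine ⟨1, one_pos, fun n m hn hm _ h => ?_⟩
    rw [key, ho, zero_dvd_iff] at h
    omega
  · refine ⟨orderOf (a / b), Nat.pos_of_ne_zero ho, fun n m hn hm hnm h => ?_⟩
    rw [key] at h ⊢
    exact (hnm.dvd_iff dvd_rfl).1 h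

theorem exists_common_period {ι L : Type*} [Fintype ι] [Field L] (a : ι → L) :
    ∃ N : ℕ, 0 < N ∧ ∀ i j, ∀ n m : ℕ, 0 < n → 0 < m → n ≡ m [MOD N] →
      a i ^ n = a j ^ n → a i ^ m = a j ^ m := by
  choose N hN h using fun p : ι × ι => exists_period (a p.1) (a p.2)
  refine ⟨∏ p, N p, Finset.prod_pos fun p _ => hN p, fun i j n m hn hm hnm => ?_⟩
  exact h (i, j) n m hn hm (hnm.of_dvd (Finset.dvd_prod_of_mem N (Finset.mem_univ (i, j))))

open Polynomial in
theorem minpoly_map_eq_prod_image {K L : Type*} [Field K] [Field L] [Algebra K L]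
    [FiniteDimensional K L] [IsGalois K L] [DecidableEq L] (x : L) :
    (minpoly K x).map (algebraMap K L) =
      ∏ β ∈ Finset.univ.image (fun σ : L ≃ₐ[K] L => σ x), (X - C β) := by
  have hs := IsGalois.splits K x
  have hsep : ((minpoly K x).map (algebraMap K L)).Separable :=
    Polynomial.Separable.map (IsGalois.separable K x)
  have hm : ((minpoly K x).map (algebraMap K L)).Monic :=
    (minpoly.monic (IsGalois.integral K x)).map _
  have hset : Finset.univ.image (fun σ : L ≃ₐ[K] L => σ x) =
      ((minpoly K x).map (algebraMap K L)).roots.toFinset := by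
    ext β
    simp only [Finset.mem_image, Finset.mem_univ, true_and, Multiset.mem_toFinset,
      mem_roots hm.ne_zero, IsRoot.def, eval_map_algebraMap]
    constructor
    · rintro ⟨σ, rfl⟩
      exact (isConjRoot_of_algEquiv x σ).aeval_eq_zero
    · intro h
      exact minpoly.exists_algEquiv_of_root' (Algebra.IsAlgebraic.isAlgebraic x) h
  rw [hset, Finset.prod, Multiset.toFinset_val, (nodup_roots hsep).dedup]
  exact hs.eq_prod_roots_of_monic hm

open Polynomial in
/-- A transversal `s` for the fibres of `σ ↦ σ(α)ᵐ` also works for every exponent `n` at which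
these fibres are the same. -/
theorem minpoly_pow_eq_prod {K L : Type*} [Field K] [Field L] [Algebra K L]
    [FiniteDimensional K L] [IsGalois K L] (α : L) (m : ℕ) :
    ∃ s : Finset (L ≃ₐ[K] L), ∀ n : ℕ,
      (∀ σ τ : L ≃ₐ[K] L, σ α ^ n = τ α ^ n ↔ σ α ^ m = τ α ^ m) →
      (minpoly K (α ^ n)).map (algebraMap K L) = ∏ σ ∈ s, (X - C (σ α ^ n)) := by
  classical
  let e : (L ≃ₐ[K] L) → L := fun σ => σ α ^ m
  obtain ⟨s, -, hinj, himg⟩ := Finset.exists_subset_injOn_image_eq_of_surjOn (f := e)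
    Set.univ (Finset.univ.image e) (by
      intro β hβ
      simpa using hβ)
  refine ⟨s, fun n hn => ?_⟩
  have h : Finset.univ.image (fun σ : L ≃ₐ[K] L => σ (α ^ n)) = s.image (fun σ => σ α ^ n) := by
    refine Finset.Subset.antisymm (fun β hβ => ?_) (fun β hβ => ?_)
    · obtain ⟨σ, -, rfl⟩ := Finset.mem_image.1 hβ
      have : σ α ^ m ∈ s.image (fun σ => σ α ^ m) := by
        rw [himg]; exact Finset.mem_image_of_mem _ (Finset.mem_univ σ)
      obtain ⟨τ, hτ, e⟩ := Finset.mem_image.1 this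
      exact Finset.mem_image.2 ⟨τ, hτ, by rw [map_pow]; exact (hn τ σ).2 e⟩
    · obtain ⟨σ, -, rfl⟩ := Finset.mem_image.1 hβ
      exact Finset.mem_image.2 ⟨σ, Finset.mem_univ σ, map_pow σ α n⟩
  rw [minpoly_map_eq_prod_image, h, Finset.prod_image]
  exact fun σ hσ τ hτ e => hinj hσ hτ ((hn σ τ).1 e)

/-- For `α` in a finite Galois extension `L` of a characteristic-zero field `K`,
the sequence of minimal polynomials `Pₙ(T)` of `αⁿ` over `K` (viewed in `L[T]`)
is a rational sequence: there are `F ∈ (L[T])[x]` and `G ∈ L[x]`, `G ≠ 0`, with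
`G(x) * ∑ Pₙ(T) xⁿ = F(x)` as power series over `L[T]`. -/
theorem minpoly_pow_seq_rational {K L : Type*} [Field K] [Field L]
    [Algebra K L] [CharZero K] [FiniteDimensional K L] [IsGalois K L]
    (α : L) :
    ∃ F : Polynomial (Polynomial L), ∃ G : Polynomial L, G ≠ 0 ∧
      ((G.map (Polynomial.C : L →+* Polynomial L) : Polynomial (Polynomial L)) :
          PowerSeries (Polynomial L)) *
        PowerSeries.mk (fun n => (minpoly K (α ^ n)).map (algebraMap K L)) =
      (F : PowerSeries (Polynomial L)) := by
  change IsRationalSeq (fun n => (minpoly K (α ^ n)).map (algebraMap K L))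
  obtain ⟨N, hN, hper⟩ := exists_common_period (fun σ : L ≃ₐ[K] L => σ α)
  -- The class of `r` is represented by the positive exponent `r + N`.
  choose s hs using fun r : ℕ => minpoly_pow_eq_prod (K := K) α (r + N)
  let g : ℕ → ℕ → Polynomial L := fun r n => if n % N = r then
    1 * Polynomial.C 1 ^ n * ∏ σ ∈ s r, (Polynomial.X - Polynomial.C (σ α ^ n)) else 0
  have hg : IsRationalSeq (fun n => ∑ r ∈ Finset.range N, g r n) :=
    IsRationalSeq.sum _ fun r hr =>
      IsRationalSeq.prod_class (Finset.mem_range.1 hr) (fun σ : L ≃ₐ[K] L => σ α) (s r) 1 1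
  have hsum : ∀ n, ∑ r ∈ Finset.range N, g r n =
      ∏ σ ∈ s (n % N), (Polynomial.X - Polynomial.C (σ α ^ n)) := fun n => by
    simp [g, Nat.mod_lt n hN]
  convert hg.add (IsRationalSeq.single_zero
    ((minpoly K (α ^ 0)).map (algebraMap K L) - ∑ r ∈ Finset.range N, g r 0)) using 2 with n
  split_ifs with hn
  · subst hn; ring
  · rw [add_zero, hsum]
    have hmod : n ≡ n % N + N [MOD N] := by simp [Nat.ModEq]
    exact hs (n % N) n fun σ τ =>
      ⟨hper σ τ n _ (by omega) (by omega) hmod, hper σ τ _ n (by omega) (by omega) hmod.symm⟩
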